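/- (Theorem 2) Greedy achieves a (1−1/e)-approximation for cardinality-constrained monotone submodular maximization: let f be a monotone submodular set function on finite subsets of V with f(∅) = 0, and let k ≥ 1. Define S_0 = ∅ and for i = 0, …, k−1 let S_{i+1} = S_i ∪ {v_i} where v_i maximizes the marginal gain f(S_i∪{u}) − f(S_i) over u ∈ V \ S_i. Then f(S_k) ≥ (1 − 1/e) · max { f(S) : S ⊆ V, |S| = k }. -/

import Mathlib

/-!
By submodularity, the gain of adding all of `O` to `S` is at most the sum over `O` of the marginal
gains at `S`, and each of these is at most the gain of a greedy step. If `O` has at most `k`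
elements, a greedy step therefore closes at least a fraction `1 / k` of the gap between `f S` and
`f O`, so `m` steps leave at most the fraction `(1 - 1 / k) ^ m ≤ exp (-m / k)` of the initial gap.
-/

open Finset

section OrderedGroup

variable {V R : Type*} [DecidableEq V] [AddCommGroup R]

/-- The marginal gain `f_u(S)` of an element `u` with respect to a set `S`; it is `0` if `u ∈ S`. -/
def marginalGain (f : Finset V → R) (S : Finset V) (u : V) : R :=
  f (insert u S) - f S

theorem marginalGain_of_mem (f : Finset V → R) {S : Finset V} {u : V} (hu : u ∈ S) :
    marginalGain f S u = 0 := by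
  rw [marginalGain, insert_eq_of_mem hu, sub_self]

variable [PartialOrder R]

/-- Submodularity of a set function in its diminishing-returns form: the marginal gain of an
element outside the larger set decreases along inclusion. -/
def IsSubmodular (f : Finset V → R) : Prop :=
  ∀ ⦃S T : Finset V⦄ ⦃u : V⦄, S ⊆ T → u ∉ T → marginalGain f T u ≤ marginalGain f S u

/-- `T` arises from `S` by one step of the greedy algorithm: it adds an element whose marginal gain
is at least that of every element outside `S`. The added element may lie in `S`, so that a greedy
run can continue once `S` is everything. -/
def IsGreedyStep (f : Finset V → R) (S T : Finset V) : Prop :=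
  ∃ v, T = insert v S ∧ ∀ u ∉ S, marginalGain f S u ≤ marginalGain f S v

variable {f : Finset V → R} {S T : Finset V}

theorem IsGreedyStep.le (hmono : Monotone f) (h : IsGreedyStep f S T) : f S ≤ f T := by
  obtain ⟨v, rfl, -⟩ := h
  exact hmono (subset_insert v S)

variable [IsOrderedAddMonoid R]

theorem marginalGain_nonneg (hmono : Monotone f) (S : Finset V) (u : V) :
    0 ≤ marginalGain f S u :=
  sub_nonneg.2 (hmono (subset_insert u S))

theorem IsSubmodular.union_sub_le_sum_marginalGain (hf : IsSubmodular f) (S O : Finset V) :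
    f (O ∪ S) - f S ≤ ∑ u ∈ O, marginalGain f S u := by
  induction O using Finset.induction_on with
  | empty => simp
  | insert a O haO ih =>
    have last_gain_le : marginalGain f (O ∪ S) a ≤ marginalGain f S a := by
      by_cases haS : a ∈ S
      · rw [marginalGain_of_mem f haS, marginalGain_of_mem f (mem_union_right O haS)]
      · exact hf subset_union_right (notMem_union.2 ⟨haO, haS⟩)
    calc f (insert a O ∪ S) - f S
        = marginalGain f (O ∪ S) a + (f (O ∪ S) - f S) := by
          rw [marginalGain, insert_union, sub_add_sub_cancel]
      _ ≤ marginalGain f S a + ∑ u ∈ O, marginalGain f S u := add_le_add last_gain_le ih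
      _ = ∑ u ∈ insert a O, marginalGain f S u := (sum_insert haO).symm

theorem IsGreedyStep.marginalGain_le (hmono : Monotone f) (h : IsGreedyStep f S T) (u : V) :
    marginalGain f S u ≤ f T - f S := by
  obtain ⟨v, rfl, hv⟩ := h
  by_cases hu : u ∈ S
  · rw [marginalGain_of_mem f hu]
    exact marginalGain_nonneg hmono S v
  · exact hv u hu

theorem IsGreedyStep.sub_le_card_nsmul (hmono : Monotone f) (hf : IsSubmodular f)
    (h : IsGreedyStep f S T) (O : Finset V) : f O - f S ≤ #O • (f T - f S) :=
  calc f O - f S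
      ≤ f (O ∪ S) - f S := sub_le_sub_right (hmono subset_union_left) _
    _ ≤ ∑ u ∈ O, marginalGain f S u := hf.union_sub_le_sum_marginalGain S O
    _ ≤ #O • (f T - f S) := sum_le_card_nsmul O _ _ fun u _ => h.marginalGain_le hmono u

end OrderedGroup

theorem IsGreedyStep.sub_le_one_sub_inv_mul_sub {V K : Type*} [DecidableEq V] [Field K]
    [LinearOrder K] [IsStrictOrderedRing K] {f : Finset V → K} {S T O : Finset V} {k : ℕ}
    (hmono : Monotone f) (hf : IsSubmodular f) (h : IsGreedyStep f S T) (hk : 0 < k)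
    (hO : #O ≤ k) : f O - f T ≤ (1 - (k : K)⁻¹) * (f O - f S) := by
  have gap_le : f O - f S ≤ k * (f T - f S) :=
    calc f O - f S
        ≤ #O • (f T - f S) := h.sub_le_card_nsmul hmono hf O
      _ ≤ k • (f T - f S) := nsmul_le_nsmul_left (sub_nonneg.2 (h.le hmono)) hO
      _ = k * (f T - f S) := nsmul_eq_mul _ _
  have inv_mul_gap_le : (k : K)⁻¹ * (f O - f S) ≤ f T - f S :=
    (inv_mul_le_iff₀ (Nat.cast_pos.2 hk)).2 gap_le
  linarith

theorem one_sub_inv_natCast_nonneg (k : ℕ) : 0 ≤ 1 - (k : ℝ)⁻¹ :=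
  sub_nonneg.2 (Nat.cast_inv_le_one k)

theorem one_sub_inv_pow_le_exp_neg_div (k m : ℕ) :
    (1 - (k : ℝ)⁻¹) ^ m ≤ Real.exp (-(m / k)) :=
  calc (1 - (k : ℝ)⁻¹) ^ m
      ≤ Real.exp (-(k : ℝ)⁻¹) ^ m :=
        pow_le_pow_left₀ (one_sub_inv_natCast_nonneg k) (Real.one_sub_le_exp_neg _) m
    _ = Real.exp (-(m / k)) := by rw [← Real.exp_nat_mul, mul_neg, div_eq_mul_inv]

section Real

variable {V : Type*} [DecidableEq V] {f : Finset V → ℝ} {S : ℕ → Finset V} {O : Finset V} {k m : ℕ}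

theorem sub_le_one_sub_inv_pow_mul_sub_of_isGreedyStep (hmono : Monotone f) (hf : IsSubmodular f)
    (hstep : ∀ i < m, IsGreedyStep f (S i) (S (i + 1))) (hk : 0 < k) (hO : #O ≤ k) :
    f O - f (S m) ≤ (1 - (k : ℝ)⁻¹) ^ m * (f O - f (S 0)) :=
  le_geom (u := fun i => f O - f (S i)) (one_sub_inv_natCast_nonneg k) m fun i hi =>
    (hstep i hi).sub_le_one_sub_inv_mul_sub hmono hf hk hO

theorem greedy_one_sub_inv_e_approximation_general (hmono : Monotone f) (hf : IsSubmodular f)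
    (hS0 : S 0 = ∅) (hstep : ∀ i < m, IsGreedyStep f (S i) (S (i + 1))) (hk : 0 < k)
    (hO : #O ≤ k) : (1 - Real.exp (-(m / k))) * (f O - f ∅) ≤ f (S m) - f ∅ := by
  have gap_le : f O - f (S m) ≤ Real.exp (-(m / k)) * (f O - f ∅) :=
    calc f O - f (S m)
        ≤ (1 - (k : ℝ)⁻¹) ^ m * (f O - f ∅) :=
          hS0 ▸ sub_le_one_sub_inv_pow_mul_sub_of_isGreedyStep hmono hf hstep hk hO
      _ ≤ Real.exp (-(m / k)) * (f O - f ∅) :=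
          mul_le_mul_of_nonneg_right (one_sub_inv_pow_le_exp_neg_div k m)
            (sub_nonneg.2 (hmono (empty_subset O)))
  linarith

end Real

/-- Theorem 2: greedy achieves a `(1 − 1/e)`-approximation for
cardinality-constrained monotone submodular maximization. Starting from
`S 0 = ∅`, at each step the element of maximum marginal gain among the
remaining elements is added; the final set `S k` satisfies
`f(S k) ≥ (1 − 1/e) · f(O)` for every `O ⊆ V` with `|O| = k`. -/
theorem greedy_one_sub_inv_e_approximation {V : Type*} [Fintype V] [DecidableEq V]
    (k : ℕ) (hk : 1 ≤ k) (hcard : k ≤ Fintype.card V)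
    (f : Finset V → ℝ) (hnorm : f ∅ = 0)
    (hmono : ∀ S T : Finset V, S ⊆ T → f S ≤ f T)
    (hsub : ∀ S T : Finset V, ∀ u : V, S ⊆ T → u ∉ T →
      f (insert u T) - f T ≤ f (insert u S) - f S)
    (S : ℕ → Finset V) (v : ℕ → V) (hS0 : S 0 = ∅)
    (hstep : ∀ i < k, v i ∉ S i ∧ S (i + 1) = insert (v i) (S i) ∧
      ∀ u : V, u ∉ S i →
        f (insert u (S i)) - f (S i) ≤ f (insert (v i) (S i)) - f (S i)) :
    ∀ O : Finset V, O.card = k → (1 - 1 / Real.exp 1) * f O ≤ f (S k) := by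
  intro O hO
  have hk0 : k ≠ 0 := Nat.ne_of_gt hk
  simpa [hnorm, Real.exp_neg, hk0] using greedy_one_sub_inv_e_approximation_general
    (fun S T => hmono S T) (fun S T u => hsub S T u) hS0 (fun i hi => ⟨v i, (hstep i hi).2⟩)
    hk hO.le
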